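/- Suppose 1 < p < ∞, let p' be the conjugate exponent of p, and let g be holomorphic on the unit disc D. Then the following are equivalent: (a) the Volterra operator T_g maps the Besov space B^p into the Bloch space 𝓑; (b) g ∈ 𝓑_{log,1/p'}; (c) T_g maps B^p into the little Bloch space 𝓑_0. -/

import Mathlib

open MeasureTheory Metric Complex Real Filter Set

noncomputable section

/-- `f` is holomorphic on the open unit disc. -/
def HolOn (f : ℂ → ℂ) : Prop := DifferentiableOn ℂ f (Metric.ball (0:ℂ) 1)

/-- The normalized Lebesgue area measure on `ℂ` (so the unit disc has total mass 1). -/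
def dA : Measure ℂ := (ENNReal.ofReal π)⁻¹ • volume

/-- Bounded holomorphic functions on the unit disc. -/
def Hinf : Set (ℂ → ℂ) :=
  {f | HolOn f ∧ ∃ C : ℝ, ∀ z ∈ Metric.ball (0:ℂ) 1, ‖f z‖ ≤ C}

/-- The Bloch space. -/
def Bloch : Set (ℂ → ℂ) :=
  {f | HolOn f ∧ ∃ C : ℝ, ∀ z ∈ Metric.ball (0:ℂ) 1,
      (1 - ‖z‖ ^ 2) * ‖deriv f z‖ ≤ C}

/-- The little Bloch space: `(1-|z|²)|f'(z)| → 0` as `|z| → 1⁻`. -/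
def littleBloch : Set (ℂ → ℂ) :=
  {f | HolOn f ∧ ∀ ε : ℝ, 0 < ε → ∃ r : ℝ, r < 1 ∧ ∀ z ∈ Metric.ball (0:ℂ) 1,
      r < ‖z‖ → (1 - ‖z‖ ^ 2) * ‖deriv f z‖ < ε}

/-- The `α`-logarithmic Bloch space. -/
def BlochLog (α : ℝ) : Set (ℂ → ℂ) :=
  {f | HolOn f ∧ ∃ C : ℝ, ∀ z ∈ Metric.ball (0:ℂ) 1,
      (1 - ‖z‖ ^ 2) * (Real.log (2 / (1 - ‖z‖ ^ 2))) ^ α *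
        ‖deriv f z‖ ≤ C}

/-- The Besov space `B¹`: holomorphic `f` with `∫_D |f''| dA < ∞`. -/
def Besov1 : Set (ℂ → ℂ) :=
  {f | HolOn f ∧ ∫⁻ z in Metric.ball (0:ℂ) 1,
      ENNReal.ofReal (‖deriv (deriv f) z‖) ∂dA < ⊤}

/-- The Besov space `Bᵖ` (`1 < p < ∞`): `∫_D (1-|z|)^(p-2) |f'(z)|^p dA(z) < ∞`. -/
def Besov (p : ℝ) : Set (ℂ → ℂ) :=
  {f | HolOn f ∧ ∫⁻ z in Metric.ball (0:ℂ) 1,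
      ENNReal.ofReal ((1 - ‖z‖) ^ (p - 2) * ‖deriv f z‖ ^ p) ∂dA < ⊤}

open scoped Classical in
/-- The Besov space `Bᵖ` for all `1 ≤ p < ∞` (with the special definition at `p = 1`). -/
def BesovFull (p : ℝ) : Set (ℂ → ℂ) := if p = 1 then Besov1 else Besov p

/-- The Möbius transformation `φ_a(z) = (a-z)/(1 - conj a · z)`. -/
def phi (a z : ℂ) : ℂ := (a - z) / (1 - (starRingEnd ℂ) a * z)

/-- The space `Q_s`. -/
def Qs (s : ℝ) : Set (ℂ → ℂ) :=
  {f | HolOn f ∧ ⨆ a ∈ Metric.ball (0:ℂ) 1, ∫⁻ z in Metric.ball (0:ℂ) 1,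
      ENNReal.ofReal (‖deriv f z‖ ^ 2 *
        (1 - ‖phi a z‖ ^ 2) ^ s) ∂dA < ⊤}

/-- The space `Q_{s,log,α}`. -/
def QsLog (s α : ℝ) : Set (ℂ → ℂ) :=
  {f | HolOn f ∧ ⨆ a ∈ Metric.ball (0:ℂ) 1,
      (ENNReal.ofReal ((Real.log (2 / (1 - ‖a‖))) ^ (2 * α)) *
        ∫⁻ z in Metric.ball (0:ℂ) 1,
          ENNReal.ofReal (‖deriv f z‖ ^ 2 *
            (1 - ‖phi a z‖ ^ 2) ^ s) ∂dA) < ⊤}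

/-- The Volterra operator `T_g(f)(z) = ∫_0^z g'(ξ) f(ξ) dξ` (along the segment from 0 to z). -/
def Tg (g f : ℂ → ℂ) : ℂ → ℂ :=
  fun z => z * ∫ t in (0:ℝ)..1, deriv g ((t : ℂ) * z) * f ((t : ℂ) * z)

/-- The companion operator `I_g(f)(z) = ∫_0^z g(ξ) f'(ξ) dξ` (along the segment from 0 to z). -/
def Ig (g f : ℂ → ℂ) : ℂ → ℂ :=
  fun z => z * ∫ t in (0:ℝ)..1, g ((t : ℂ) * z) * deriv f ((t : ℂ) * z)

/-- The multiplication operator `M_g(f) = g · f`. -/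
def Mg (g f : ℂ → ℂ) : ℂ → ℂ := fun z => g z * f z

/-- `T` maps `X` into `Y`. -/
def MapsInto (T : (ℂ → ℂ) → (ℂ → ℂ)) (X Y : Set (ℂ → ℂ)) : Prop :=
  ∀ f ∈ X, T f ∈ Y

/-- The Hardy space `H^q`. -/
def Hardy (q : ℝ) : Set (ℂ → ℂ) :=
  {f | HolOn f ∧ ∃ C : ℝ, ∀ r : ℝ, 0 < r → r < 1 →
      (1 / (2 * π)) * ∫ t in (0:ℝ)..(2 * π),
        ‖f ((r : ℂ) * Complex.exp ((t : ℂ) * Complex.I))‖ ^ q ≤ C}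

/-- An inner function: bounded holomorphic with radial boundary values of modulus 1 a.e. -/
def IsInner (g : ℂ → ℂ) : Prop :=
  g ∈ Hinf ∧ ∀ᵐ t : ℝ ∂(volume.restrict (Set.Ioc (0:ℝ) (2 * π))),
    Filter.Tendsto (fun r : ℝ => ‖g ((r : ℂ) * Complex.exp ((t : ℂ) * Complex.I))‖)
      (nhdsWithin 1 (Set.Iio 1)) (nhds 1)

/-- `X` has the f-property (division by inner functions). -/
def FProperty (X : Set (ℂ → ℂ)) : Prop :=
  ∀ h ∈ X, ∀ g : ℂ → ℂ, IsInner g →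
    (fun z => h z / g z) ∈ Hardy 1 → (fun z => h z / g z) ∈ X

/-- The space of multipliers `M(X,Y)`. -/
def Mult (X Y : Set (ℂ → ℂ)) : Set (ℂ → ℂ) :=
  {g | HolOn g ∧ ∀ f ∈ X, (fun z => g z * f z) ∈ Y}

end

/-!
Since `(T_g f)' = g' f`, the theorem compares `g'` with the growth of functions in `B^p`. The kernel
`k_a(z) = log (1 / (1 - ā z))` reproduces `f(a) - f(0)` in the Dirichlet pairing, and its `q`-th
power Besov seminorm is of order `log (2 / (1 - |a|²))` for every `q > 1`. Hölder's inequality with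
conjugate weights therefore gives `|f(a)| = O(log (2 / (1 - |a|²)) ^ (1 / p'))` on `B^p`; applied to
the part of the integral near the boundary, where `f` has little energy, it improves `O` to `o`,
which is why the logarithmic Bloch condition already yields the little Bloch space.

Conversely, if that condition fails along points `a_n`, with the constant `4^n` exceeded at `a_n`,
take `F = ∑ 2⁻ⁿ f_n`, where `f_n` is `log (2 / (1 - ā_n z))` normalized in `B^p`. The `f_n` have
nonnegative real part, so nothing cancels, `|F(a_n)| ≥ 2⁻ⁿ f_n(a_n)`, and `T_g F` is not Bloch.
-/

/-! ### Logarithmic weight, kernel and energy -/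

/-- The weight `log (2 / (1 - |z|²))` of the logarithmic Bloch spaces. -/
noncomputable def logWeight (z : ℂ) : ℝ := Real.log (2 / (1 - ‖z‖ ^ 2))

/-- The kernel `log (1 / (1 - ā z))`, which reproduces `f a - f 0` in the Dirichlet pairing
`∫ f' conj(k')` over the disc. -/
noncomputable def logKernel (a z : ℂ) : ℂ := -Complex.log (1 - starRingEnd ℂ a * z)

/-- The part carried by `S` of the `p`-th power of the Besov seminorm of `f`. -/
noncomputable def besovEnergy (p : ℝ) (f : ℂ → ℂ) (S : Set ℂ) : ENNReal :=
  ∫⁻ z in S, ENNReal.ofReal ((1 - ‖z‖) ^ (p - 2) * ‖deriv f z‖ ^ p) ∂dA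

lemma one_sub_norm_sq_pos {z : ℂ} (hz : z ∈ ball (0 : ℂ) 1) : 0 < 1 - ‖z‖ ^ 2 := by
  nlinarith [mem_ball_zero_iff.1 hz, norm_nonneg z]

lemma log_two_le_logWeight {z : ℂ} (hz : z ∈ ball (0 : ℂ) 1) : Real.log 2 ≤ logWeight z := by
  refine Real.log_le_log two_pos ?_
  rw [le_div_iff₀ (one_sub_norm_sq_pos hz)]
  nlinarith [norm_nonneg z]

lemma logWeight_pos {z : ℂ} (hz : z ∈ ball (0 : ℂ) 1) : 0 < logWeight z :=
  (Real.log_pos one_lt_two).trans_le (log_two_le_logWeight hz)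

lemma logWeight_le_logWeight {z w : ℂ} (hzw : ‖z‖ ≤ ‖w‖) (hw : w ∈ ball (0 : ℂ) 1) :
    logWeight z ≤ logWeight w := by
  have hpos := one_sub_norm_sq_pos hw
  have hle : 1 - ‖w‖ ^ 2 ≤ 1 - ‖z‖ ^ 2 := by gcongr
  have hpos' : 0 < 1 - ‖z‖ ^ 2 := hpos.trans_le hle
  unfold logWeight
  gcongr

lemma exists_lt_logWeight_rpow {α : ℝ} (hα : 0 < α) (K : ℝ) :
    ∃ r < 1, ∀ z ∈ ball (0 : ℂ) 1, r < ‖z‖ → K < logWeight z ^ α := by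
  have hgap : Tendsto (fun x : ℝ => 1 - x ^ 2) (nhdsWithin 1 (Iio 1)) (nhdsWithin 0 (Ioi 0)) := by
    refine tendsto_nhdsWithin_iff.2 ⟨?_, ?_⟩
    · have hcont : Continuous fun x : ℝ => 1 - x ^ 2 := by fun_prop
      simpa using (hcont.tendsto 1).mono_left nhdsWithin_le_nhds
    · filter_upwards [Ioo_mem_nhdsLT (zero_lt_one' ℝ)] with x hx
      exact mem_Ioi.2 (by nlinarith [hx.1, hx.2])
  have hlim : Tendsto (fun x : ℝ => Real.log (2 / (1 - x ^ 2)) ^ α) (nhdsWithin 1 (Iio 1)) atTop :=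
    (tendsto_rpow_atTop hα).comp <| Real.tendsto_log_atTop.comp <|
      (tendsto_inv_nhdsGT_zero.comp hgap).const_mul_atTop two_pos
  obtain ⟨r, hr, hsub⟩ := mem_nhdsLT_iff_exists_Ioo_subset.1 (hlim.eventually_gt_atTop K)
  exact ⟨r, hr, fun z hz hrz => hsub ⟨hrz, mem_ball_zero_iff.1 hz⟩⟩

protected lemma HolOn.deriv {f : ℂ → ℂ} (hf : HolOn f) : HolOn (deriv f) :=
  DifferentiableOn.deriv hf isOpen_ball

lemma HolOn.hasDerivAt {f : ℂ → ℂ} (hf : HolOn f) {z : ℂ} (hz : z ∈ ball (0 : ℂ) 1) :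
    HasDerivAt f (deriv f z) z :=
  (DifferentiableOn.differentiableAt hf (isOpen_ball.mem_nhds hz)).hasDerivAt

lemma HolOn.of_hasDerivAt {f f' : ℂ → ℂ} (h : ∀ z ∈ ball (0 : ℂ) 1, HasDerivAt f (f' z) z) :
    HolOn f :=
  fun z hz => (h z hz).differentiableAt.differentiableWithinAt

lemma ofReal_mul_mem_ball {t : ℝ} (ht : t ∈ Icc (0 : ℝ) 1) {z : ℂ} (hz : z ∈ ball (0 : ℂ) 1) :
    (t : ℂ) * z ∈ ball (0 : ℂ) 1 := by
  rw [mem_ball_zero_iff] at hz ⊢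
  rw [norm_mul, norm_real, Real.norm_of_nonneg ht.1]
  nlinarith [norm_nonneg z, ht.2]

lemma HolOn.mul_integral_deriv {f : ℂ → ℂ} (hf : HolOn f) {z : ℂ} (hz : z ∈ ball (0 : ℂ) 1) :
    z * ∫ t in (0 : ℝ)..1, deriv f ((t : ℂ) * z) = f z - f 0 := by
  have hmem : ∀ t ∈ Icc (0 : ℝ) 1, 0 + t • z ∈ ball (0 : ℂ) 1 := fun t ht => by
    simpa only [zero_add, real_smul] using ofReal_mul_mem_ball ht hz
  have hcont : ContinuousOn (fun t : ℝ => deriv f (0 + t • z)) (Icc 0 1) :=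
    hf.deriv.continuousOn.comp (by fun_prop) hmem
  simpa only [zero_add, real_smul, smul_eq_mul] using
    intervalIntegral.integral_unitInterval_deriv_eq_sub hcont
      fun t ht => hf.hasDerivAt (hmem t ht)

lemma HolOn.hasDerivAt_Tg {f g : ℂ → ℂ} (hg : HolOn g) (hf : HolOn f) {z : ℂ}
    (hz : z ∈ ball (0 : ℂ) 1) : HasDerivAt (Tg g f) (deriv g z * f z) z := by
  obtain ⟨F, hF⟩ := DifferentiableOn.isExactOn_ball (DifferentiableOn.mul hg.deriv hf)
  have hTg : EqOn (Tg g f) (fun w => F w - F 0) (ball 0 1) := fun w hw => by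
    change Tg g f w = F w - F 0
    rw [← (HolOn.of_hasDerivAt hF).mul_integral_deriv hw, Tg]
    congr 1
    refine intervalIntegral.integral_congr fun t ht => ?_
    rw [uIcc_of_le zero_le_one] at ht
    exact (hF _ (ofReal_mul_mem_ball ht hw)).deriv.symm
  exact ((hF z hz).sub_const (F 0)).congr_of_eventuallyEq
    (hTg.eventuallyEq_of_mem (isOpen_ball.mem_nhds hz))

lemma littleBloch_subset_Bloch : littleBloch ⊆ Bloch := by
  rintro f ⟨hf, hlittle⟩
  obtain ⟨r, hr, hb⟩ := hlittle 1 one_pos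
  have hcont : ContinuousOn (fun z => (1 - ‖z‖ ^ 2) * ‖deriv f z‖) (closedBall 0 r) :=
    ContinuousOn.mul (by fun_prop)
      (hf.deriv.continuousOn.mono (closedBall_subset_ball hr)).norm
  obtain ⟨C, hC⟩ := (isCompact_closedBall (0 : ℂ) r).bddAbove_image hcont
  refine ⟨hf, max C 1, fun z hz => ?_⟩
  obtain hzr | hrz := le_or_gt ‖z‖ r
  · exact (hC (mem_image_of_mem _ (by simpa using hzr))).trans (le_max_left _ _)
  · exact (hb z hz hrz).le.trans (le_max_right _ _)

/-! ### The reproducing formula and the conjugate-weight Hölder inequality -/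

lemma setLIntegral_ball_dA {G : ℂ → ENNReal} (hG : Measurable G) (R : ℝ) :
    ∫⁻ z in ball (0 : ℂ) R, G z ∂dA = ∫⁻ r in Ioo 0 R, ENNReal.ofReal (r / π) *
      ∫⁻ θ in Ioo (-π) π, G (circleMap 0 r θ) := by
  have hcircle : ∀ r θ : ℝ, Complex.polarCoord.symm (r, θ) = circleMap 0 r θ := fun r θ => by
    simp [circleMap, Complex.exp_mul_I]
  have hindicator : EqOn
      (fun x : ℝ × ℝ => ENNReal.ofReal x.1 • (ball 0 R).indicator G (Complex.polarCoord.symm x))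
      ((Iio R ×ˢ univ).indicator fun x => ENNReal.ofReal x.1 * G (circleMap 0 x.1 x.2))
      polarCoord.target := fun x hx => by
    have hx0 : 0 < x.1 := by simpa [polarCoord_target] using hx.1
    have hmem : circleMap 0 x.1 x.2 ∈ ball (0 : ℂ) R ↔ x ∈ Iio R ×ˢ univ := by
      simp [norm_circleMap_zero, abs_of_pos hx0]
    by_cases hxR : x ∈ Iio R ×ˢ univ
    · simp only [hcircle, indicator_of_mem hxR, indicator_of_mem (hmem.2 hxR), smul_eq_mul]
    · simp only [hcircle, indicator_of_notMem hxR, indicator_of_notMem (mt hmem.1 hxR), smul_zero]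
  have : Measurable fun x : ℝ × ℝ => G (circleMap 0 x.1 x.2) :=
    hG.comp (by unfold circleMap; fun_prop)
  rw [dA, Measure.restrict_smul, lintegral_smul_measure, ← lintegral_indicator measurableSet_ball,
    ← Complex.lintegral_comp_polarCoord_symm,
    setLIntegral_congr_fun polarCoord.open_target.measurableSet hindicator,
    setLIntegral_indicator (measurableSet_Iio.prod MeasurableSet.univ), polarCoord_target,
    prod_inter_prod, univ_inter, Iio_inter_Ioi, Measure.volume_eq_prod,
    setLIntegral_prod _ (by fun_prop), smul_eq_mul, ← lintegral_const_mul' _ _ (by simp [pi_pos])]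
  refine lintegral_congr fun r => ?_
  dsimp only
  rw [lintegral_const_mul' _ _ ENNReal.ofReal_ne_top, ← mul_assoc, div_eq_inv_mul,
    ENNReal.ofReal_mul (by positivity), ENNReal.ofReal_inv_of_pos pi_pos]

lemma enorm_circleAverage_le (F : ℂ → ℂ) (c : ℂ) (r : ℝ) :
    ENNReal.ofReal (2 * π) * ‖circleAverage F c r‖ₑ ≤
      ∫⁻ θ in Ioo (-π) π, ‖F (circleMap c r θ)‖ₑ := by
  have hnorm : ENNReal.ofReal (2 * π) * ‖(2 * π)⁻¹‖ₑ = 1 := by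
    rw [Real.enorm_of_nonneg (by positivity), ← ENNReal.ofReal_mul (by positivity),
      mul_inv_cancel₀ (by positivity), ENNReal.ofReal_one]
  rw [circleAverage_eq_integral_add (-π), intervalIntegral.integral_comp_add_right
      (fun θ => F (circleMap c r θ)), zero_add, show 2 * π + -π = π by ring,
    intervalIntegral.integral_of_le (by linarith [pi_pos]), ← restrict_Ioo_eq_restrict_Ioc,
    enorm_smul, ← mul_assoc, hnorm, one_mul]
  exact enorm_integral_le_lintegral_enorm _

lemma HolOn.enorm_le_lintegral_circleMap {f : ℂ → ℂ} (hf : HolOn f) {r : ℝ} (hr : r ∈ Ioo 0 1)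
    {z : ℂ} (hz : z ∈ ball (0 : ℂ) 1) :
    ENNReal.ofReal (2 * π) * ‖f ((r ^ 2 : ℝ) * z)‖ₑ ≤ ∫⁻ θ in Ioo (-π) π,
      ‖f (circleMap 0 r θ)‖ₑ * ‖(1 - starRingEnd ℂ z * circleMap 0 r θ)⁻¹‖ₑ := by
  have habs : |r| = r := abs_of_pos hr.1
  have hcl : DiffContOnCl ℂ f (ball 0 |r|) := by
    rw [habs]
    refine DifferentiableOn.diffContOnCl (DifferentiableOn.mono hf ?_)
    rw [closure_ball _ hr.1.ne']
    exact closedBall_subset_ball hr.2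
  have hmem : ((r ^ 2 : ℝ) : ℂ) * z ∈ ball (0 : ℂ) |r| := by
    rw [mem_ball_zero_iff] at hz ⊢
    rw [norm_mul, norm_real, Real.norm_of_nonneg (sq_nonneg r), habs]
    nlinarith [hr.1, hr.2, norm_nonneg z, mul_pos hr.1 hr.1]
  rw [← hcl.circleAverage_smul_div hmem]
  refine (enorm_circleAverage_le _ _ _).trans (lintegral_mono fun θ => le_of_eq ?_)
  set ζ := circleMap 0 r θ with hζ
  have hζ0 : ζ ≠ 0 := circleMap_ne_center hr.1.ne'
  -- On `|ζ| = r` the Cauchy kernel at the reflected point `r² z` is `1 / (1 - z ζ̄)`.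
  have hsq : ((r ^ 2 : ℝ) : ℂ) = ζ * starRingEnd ℂ ζ := by
    rw [mul_conj, normSq_eq_norm_sq, hζ, norm_circleMap_zero, sq_abs]
  have hkernel : ζ / (ζ - (r ^ 2 : ℝ) * z) = starRingEnd ℂ (1 - starRingEnd ℂ z * ζ)⁻¹ := by
    rw [hsq, show ζ - ζ * starRingEnd ℂ ζ * z = ζ * (1 - z * starRingEnd ℂ ζ) by ring,
      ← div_div, div_self hζ0, one_div]
    simp only [map_inv₀, map_sub, map_one, map_mul, conj_conj]
  rw [sub_zero, smul_eq_mul, enorm_mul, mul_comm, hkernel, RCLike.enorm_conj]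

lemma one_sub_conj_mul_mem_slitPlane {a z : ℂ} (ha : a ∈ ball (0 : ℂ) 1)
    (hz : z ∈ ball (0 : ℂ) 1) : 1 - starRingEnd ℂ a * z ∈ slitPlane := by
  rw [mem_ball_zero_iff] at ha hz
  rw [sub_eq_add_neg]
  refine mem_slitPlane_of_norm_lt_one ?_
  rw [norm_neg, norm_mul, RCLike.norm_conj]
  nlinarith [norm_nonneg a, norm_nonneg z]

lemma hasDerivAt_logKernel {a z : ℂ} (ha : a ∈ ball (0 : ℂ) 1) (hz : z ∈ ball (0 : ℂ) 1) :
    HasDerivAt (logKernel a) (starRingEnd ℂ a / (1 - starRingEnd ℂ a * z)) z := by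
  have hinner : HasDerivAt (fun w => 1 - starRingEnd ℂ a * w) (-starRingEnd ℂ a) z := by
    simpa using ((hasDerivAt_id z).const_mul (starRingEnd ℂ a)).const_sub 1
  have houter := (hinner.clog (one_sub_conj_mul_mem_slitPlane ha hz)).neg
  rwa [neg_div, neg_neg] at houter

lemma circleMap_zero_mem_ball {r : ℝ} (hr : r ∈ Ioo 0 1) (θ : ℝ) :
    circleMap 0 r θ ∈ ball (0 : ℂ) 1 := by
  rw [mem_ball_zero_iff, norm_circleMap_zero, abs_of_pos hr.1]
  exact hr.2

lemma HolOn.enorm_mul_le_lintegral_logKernel {f : ℂ → ℂ} (hf : HolOn f) {r : ℝ}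
    (hr : r ∈ Ioo 0 1) {z : ℂ} (hz : z ∈ ball (0 : ℂ) 1) :
    ‖f ((r ^ 2 : ℝ) * z) * ((2 * r : ℝ) * z)‖ₑ ≤ ENNReal.ofReal (r / π) *
      ∫⁻ θ in Ioo (-π) π,
        ‖f (circleMap 0 r θ)‖ₑ * ‖deriv (logKernel z) (circleMap 0 r θ)‖ₑ := by
  have hjacobian : ‖((2 * r : ℝ) : ℂ)‖ₑ = ENNReal.ofReal (r / π) * ENNReal.ofReal (2 * π) := by
    rw [← ENNReal.ofReal_mul (div_nonneg hr.1.le pi_pos.le), ← ofReal_norm, norm_real,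
      Real.norm_of_nonneg (by linarith [hr.1])]
    congr 1
    field_simp
  calc ‖f ((r ^ 2 : ℝ) * z) * ((2 * r : ℝ) * z)‖ₑ
      = ENNReal.ofReal (r / π) * ‖z‖ₑ *
          (ENNReal.ofReal (2 * π) * ‖f ((r ^ 2 : ℝ) * z)‖ₑ) := by
        rw [enorm_mul, enorm_mul, hjacobian]
        ring
    _ ≤ ENNReal.ofReal (r / π) * ‖z‖ₑ * ∫⁻ θ in Ioo (-π) π,
          ‖f (circleMap 0 r θ)‖ₑ * ‖(1 - starRingEnd ℂ z * circleMap 0 r θ)⁻¹‖ₑ := by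
        gcongr
        exact hf.enorm_le_lintegral_circleMap hr hz
    _ = _ := by
        rw [mul_assoc, ← lintegral_const_mul' _ _ enorm_ne_top]
        congr 1
        refine lintegral_congr fun θ => ?_
        rw [(hasDerivAt_logKernel hz (circleMap_zero_mem_ball hr θ)).deriv, div_eq_mul_inv,
          enorm_mul, RCLike.enorm_conj]
        ring

-- The parameter `r²` gives the Jacobian `2 r` of area measure in polar coordinates.
lemma HolOn.sub_eq_integral_deriv_sq_mul {f : ℂ → ℂ} (hf : HolOn f) {z : ℂ}
    (hz : z ∈ ball (0 : ℂ) 1) :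
    f z - f 0 = ∫ r in (0 : ℝ)..1, deriv f ((r ^ 2 : ℝ) * z) * ((2 * r : ℝ) * z) := by
  have hmem : ∀ r ∈ Icc (0 : ℝ) 1, ((r ^ 2 : ℝ) : ℂ) * z ∈ ball (0 : ℂ) 1 := fun r hr =>
    ofReal_mul_mem_ball ⟨sq_nonneg r, pow_le_one₀ hr.1 hr.2⟩ hz
  rw [← uIcc_of_le zero_le_one] at hmem
  have hderiv : ∀ r ∈ uIcc (0 : ℝ) 1, HasDerivAt (fun r : ℝ => f ((r ^ 2 : ℝ) * z))
      (deriv f ((r ^ 2 : ℝ) * z) * ((2 * r : ℝ) * z)) r := fun r hr => by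
    have hpow : HasDerivAt (fun r : ℝ => ((r ^ 2 : ℝ) : ℂ) * z) ((2 * r : ℝ) * z) r := by
      simpa using (hasDerivAt_pow 2 r).ofReal_comp.mul_const z
    exact (hf.hasDerivAt (hmem r hr)).comp r hpow
  have hcont : ContinuousOn (fun r : ℝ => deriv f ((r ^ 2 : ℝ) * z) * ((2 * r : ℝ) * z))
      (uIcc 0 1) :=
    (hf.deriv.continuousOn.comp (by fun_prop) hmem).mul (by fun_prop)
  rw [intervalIntegral.integral_eq_sub_of_hasDerivAt hderiv hcont.intervalIntegrable]
  simp

lemma HolOn.enorm_sub_le_lintegral_logKernel {f : ℂ → ℂ} (hf : HolOn f) {z : ℂ}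
    (hz : z ∈ ball (0 : ℂ) 1) :
    ‖f z - f 0‖ₑ ≤ ∫⁻ w in ball (0 : ℂ) 1, ‖deriv f w‖ₑ * ‖deriv (logKernel z) w‖ₑ ∂dA := by
  have hmeas : Measurable fun w => ‖deriv f w‖ₑ * ‖deriv (logKernel z) w‖ₑ :=
    (measurable_deriv f).enorm.mul (measurable_deriv _).enorm
  rw [hf.sub_eq_integral_deriv_sq_mul hz, setLIntegral_ball_dA hmeas,
    intervalIntegral.integral_of_le zero_le_one, ← restrict_Ioo_eq_restrict_Ioc]
  refine (enorm_integral_le_lintegral_enorm _).trans ?_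
  exact setLIntegral_mono' measurableSet_Ioo fun r hr =>
    hf.deriv.enorm_mul_le_lintegral_logKernel hr hz

lemma lintegral_rpow_weight_mul_deriv {p : ℝ} (hp : 0 < p) (f : ℂ → ℂ) {S : Set ℂ}
    (hS : MeasurableSet S) (hsub : S ⊆ ball 0 1) :
    ∫⁻ w in S, (ENNReal.ofReal ((1 - ‖w‖) ^ ((p - 2) / p)) * ‖deriv f w‖ₑ) ^ p ∂dA =
      besovEnergy p f S :=
  setLIntegral_congr_fun hS fun w hw => by
    have hw1 : 0 ≤ 1 - ‖w‖ := by linarith [mem_ball_zero_iff.1 (hsub hw)]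
    rw [← ofReal_norm, ← ENNReal.ofReal_mul (by positivity),
      ENNReal.ofReal_rpow_of_nonneg (by positivity) hp.le,
      Real.mul_rpow (by positivity) (norm_nonneg _), ← Real.rpow_mul hw1, div_mul_cancel₀ _ hp.ne']

lemma lintegral_deriv_mul_deriv_le {p q : ℝ} (hpq : p.HolderConjugate q) (f h : ℂ → ℂ)
    {S : Set ℂ} (hS : MeasurableSet S) (hsub : S ⊆ ball 0 1) :
    ∫⁻ w in S, ‖deriv f w‖ₑ * ‖deriv h w‖ₑ ∂dA ≤
      besovEnergy p f S ^ (1 / p) * besovEnergy q h S ^ (1 / q) := by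
  have hmeas : ∀ (s : ℝ) (u : ℂ → ℂ),
      Measurable fun w => ENNReal.ofReal ((1 - ‖w‖) ^ ((s - 2) / s)) * ‖deriv u w‖ₑ := fun s u =>
    Measurable.mul (f := fun w : ℂ => ENNReal.ofReal ((1 - ‖w‖) ^ ((s - 2) / s)))
      (by fun_prop) (measurable_deriv u).enorm
  have hcancel : (p - 2) / p + (q - 2) / q = 0 := by
    rw [sub_div, sub_div, div_self hpq.pos.ne', div_self hpq.symm.pos.ne', div_eq_mul_inv,
      div_eq_mul_inv]
    linarith [hpq.inv_add_inv_eq_one]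
  rw [← lintegral_rpow_weight_mul_deriv hpq.pos f hS hsub,
    ← lintegral_rpow_weight_mul_deriv hpq.symm.pos h hS hsub]
  refine le_of_eq_of_le ?_ (ENNReal.lintegral_mul_le_Lp_mul_Lq _ hpq
    (hmeas p f).aemeasurable (hmeas q h).aemeasurable)
  refine setLIntegral_congr_fun hS fun w hw => ?_
  have hw1 : 0 < 1 - ‖w‖ := by linarith [mem_ball_zero_iff.1 (hsub hw)]
  rw [Pi.mul_apply, mul_mul_mul_comm, ← ENNReal.ofReal_mul (by positivity), ← Real.rpow_add hw1,
    hcancel, Real.rpow_zero, ENNReal.ofReal_one, one_mul]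

/-! ### Besov energy of the kernel -/

lemma add_abs_le_norm_one_sub_mul_exp {x θ : ℝ} (hx0 : 0 ≤ x) (hx1 : x < 1) (hθ : |θ| ≤ π) :
    1 - x + |θ| ≤ 5 * ‖1 - x * Complex.exp (θ * Complex.I)‖ := by
  set e := Complex.exp (θ * Complex.I) with he
  have he1 : ‖e‖ = 1 := norm_exp_ofReal_mul_I θ
  have hxe : ‖x * e‖ = x := by rw [norm_mul, he1, norm_real, Real.norm_of_nonneg hx0, mul_one]
  have hradial : 1 - x ≤ ‖1 - x * e‖ := by
    simpa only [norm_one, hxe] using norm_sub_norm_le 1 (x * e)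
  have hchord : ‖1 - e‖ ≤ 2 * ‖1 - x * e‖ := by
    have hsplit : 1 - e = (1 - x * e) + ((x - 1 : ℝ) : ℂ) * e := by push_cast; ring
    have htri := norm_add_le (1 - x * e) (((x - 1 : ℝ) : ℂ) * e)
    rw [← hsplit, norm_mul, he1, mul_one, norm_real, Real.norm_eq_abs,
      abs_of_neg (by linarith)] at htri
    linarith
  have harc : |θ| ≤ 2 * ‖1 - e‖ := by
    have hsin := Real.mul_abs_le_abs_sin (x := θ / 2) (by rw [abs_div, abs_two]; linarith)
    have hpi : 2⁻¹ ≤ 2 / π := by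
      rw [inv_eq_one_div, div_le_div_iff₀ two_pos pi_pos]
      linarith [pi_lt_four]
    rw [norm_sub_rev, he, mul_comm (θ : ℂ), norm_exp_I_mul_ofReal_sub_one, norm_mul,
      Real.norm_eq_abs, Real.norm_eq_abs, abs_two]
    rw [abs_div, abs_two] at hsin
    nlinarith [abs_nonneg θ]
  linarith

lemma integral_add_abs_rpow_neg_le {u p R : ℝ} (hu : 0 < u) (hp : 1 < p) (hR : 0 ≤ R) :
    ∫ θ in -R..R, (u + |θ|) ^ (-p) ≤ 2 / (p - 1) * u ^ (1 - p) := by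
  have hcont : Continuous fun θ : ℝ => (u + |θ|) ^ (-p) :=
    Continuous.rpow_const (by fun_prop) fun θ => Or.inl (by positivity)
  have hright : ∫ θ in 0..R, (u + |θ|) ^ (-p) = (u ^ (1 - p) - (u + R) ^ (1 - p)) / (p - 1) := by
    have hnonneg : EqOn (fun θ : ℝ => (u + |θ|) ^ (-p)) (fun θ => (u + θ) ^ (-p)) (uIcc 0 R) :=
      fun θ hθ => by
        rw [uIcc_of_le hR] at hθ
        simp only [abs_of_nonneg hθ.1]
    have hzero : (0 : ℝ) ∉ uIcc u (u + R) := by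
      rw [uIcc_of_le (by linarith)]
      exact fun h => hu.not_ge h.1
    rw [intervalIntegral.integral_congr hnonneg,
      intervalIntegral.integral_comp_add_left (fun x : ℝ => x ^ (-p)), add_zero,
      integral_rpow (Or.inr ⟨by linarith, hzero⟩), ← neg_div_neg_eq, neg_sub]
    congr 1 <;> ring_nf
  have hleft : ∫ θ in -R..0, (u + |θ|) ^ (-p) = ∫ θ in 0..R, (u + |θ|) ^ (-p) := by
    simpa only [abs_neg, neg_zero] using
      (intervalIntegral.integral_comp_neg (a := 0) (b := R) fun θ : ℝ => (u + |θ|) ^ (-p)).symm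
  have : 0 < p - 1 := by linarith
  have htail : 0 ≤ (u + R) ^ (1 - p) / (p - 1) := by positivity
  rw [← intervalIntegral.integral_add_adjacent_intervals (hcont.intervalIntegrable _ 0)
    (hcont.intervalIntegrable _ _), hleft, hright, sub_div,
    div_mul_eq_mul_div, mul_div_assoc]
  linarith

lemma integral_comp_norm_one_sub_mul_exp (φ : ℝ → ℝ) (w : ℂ) :
    ∫ θ in -π..π, φ ‖1 - w * Complex.exp (θ * Complex.I)‖ =
      ∫ θ in -π..π, φ ‖1 - ‖w‖ * Complex.exp (θ * Complex.I)‖ := by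
  set F : ℝ → ℝ := fun θ => φ ‖1 - ‖w‖ * Complex.exp (θ * Complex.I)‖ with hF
  have hperiodic : Function.Periodic F (2 * π) := fun θ => by
    simp only [hF, ofReal_add, add_mul, ofReal_mul, ofReal_ofNat, Complex.exp_periodic _]
  have hshift : ∀ θ : ℝ, φ ‖1 - w * Complex.exp (θ * Complex.I)‖ = F (θ + arg w) := fun θ => by
    conv_lhs => rw [← norm_mul_exp_arg_mul_I w]
    simp only [hF, ofReal_add, add_mul, Complex.exp_add]
    congr 3
    ring
  have hrotate := hperiodic.intervalIntegral_add_eq (-π + arg w) (-π)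
  simp only [hshift, intervalIntegral.integral_comp_add_right F]
  convert! hrotate using 2 <;> ring

lemma continuous_norm_one_sub_mul_exp_rpow {w : ℂ} (hw : ‖w‖ < 1) (s : ℝ) :
    Continuous fun θ : ℝ => ‖1 - w * Complex.exp (θ * Complex.I)‖ ^ s := by
  refine Continuous.rpow_const (by fun_prop) fun θ => Or.inl (norm_ne_zero_iff.2 ?_)
  refine sub_ne_zero.2 fun h => hw.ne ?_
  simpa [norm_exp_ofReal_mul_I] using (congrArg (‖·‖) h).symm

lemma integral_norm_one_sub_mul_exp_rpow_neg_le {p : ℝ} (hp : 1 < p) {w : ℂ} (hw : ‖w‖ < 1) :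
    ∫ θ in -π..π, ‖1 - w * Complex.exp (θ * Complex.I)‖ ^ (-p) ≤
      5 ^ p * (2 / (p - 1)) * (1 - ‖w‖) ^ (1 - p) := by
  have hgap : 0 < 1 - ‖w‖ := by linarith
  have hbound : ∀ θ ∈ Icc (-π) π, ‖1 - ‖w‖ * Complex.exp (θ * Complex.I)‖ ^ (-p) ≤
      5 ^ p * (1 - ‖w‖ + |θ|) ^ (-p) := fun θ hθ => by
    have hlower := add_abs_le_norm_one_sub_mul_exp (norm_nonneg w) hw (abs_le.2 hθ)
    have hpos : 0 < 1 - ‖w‖ + |θ| := by positivity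
    have hmono := Real.rpow_le_rpow_of_nonpos hpos hlower (z := -p) (by linarith)
    rwa [Real.mul_rpow (by norm_num) (norm_nonneg _), Real.rpow_neg (by norm_num),
      inv_mul_le_iff₀ (by positivity)] at hmono
  have hcont : Continuous fun θ : ℝ => 5 ^ p * (1 - ‖w‖ + |θ|) ^ (-p) :=
    continuous_const.mul <| Continuous.rpow_const (by fun_prop) fun θ => Or.inl (by positivity)
  have hcont' := continuous_norm_one_sub_mul_exp_rpow
    (w := (‖w‖ : ℂ)) (by rwa [norm_real, norm_norm]) (-p)
  calc ∫ θ in -π..π, ‖1 - w * Complex.exp (θ * Complex.I)‖ ^ (-p)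
      = ∫ θ in -π..π, ‖1 - ‖w‖ * Complex.exp (θ * Complex.I)‖ ^ (-p) :=
        integral_comp_norm_one_sub_mul_exp (· ^ (-p)) w
    _ ≤ ∫ θ in -π..π, 5 ^ p * (1 - ‖w‖ + |θ|) ^ (-p) :=
        intervalIntegral.integral_mono_on (by linarith [pi_pos])
          (hcont'.intervalIntegrable _ _) (hcont.intervalIntegrable _ _) hbound
    _ ≤ _ := by
        rw [intervalIntegral.integral_const_mul, mul_assoc]
        gcongr
        exact integral_add_abs_rpow_neg_le hgap hp pi_pos.le

lemma setLIntegral_Ioo_ofReal {f : ℝ → ℝ} {a b : ℝ} (hab : a ≤ b)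
    (hf : IntervalIntegrable f volume a b) (hnonneg : ∀ x ∈ Ioo a b, 0 ≤ f x) :
    ∫⁻ x in Ioo a b, ENNReal.ofReal (f x) = ENNReal.ofReal (∫ x in a..b, f x) := by
  rw [intervalIntegral.integral_of_le hab, ← restrict_Ioo_eq_restrict_Ioc,
    ofReal_integral_eq_lintegral_ofReal]
  · exact ((intervalIntegrable_iff_integrableOn_Ioo_of_le hab).1 hf)
  · exact ae_restrict_of_forall_mem measurableSet_Ioo hnonneg

lemma setLIntegral_one_sub_inv_le {ρ : ℝ} (h0 : 0 ≤ ρ) (h1 : ρ < 1) :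
    ∫⁻ r in Ioo 0 ρ, ENNReal.ofReal ((1 - r)⁻¹) ≤
      ENNReal.ofReal (Real.log (2 / (1 - ρ ^ 2))) := by
  have hne : ∀ r ∈ uIcc 0 ρ, 1 - r ≠ 0 := fun r hr => by
    rw [uIcc_of_le h0] at hr
    linarith [hr.2]
  have hcont : ContinuousOn (fun r : ℝ => (1 - r)⁻¹) (uIcc 0 ρ) :=
    ContinuousOn.inv₀ (by fun_prop) hne
  have hintegral : ∫ r in 0..ρ, (1 - r)⁻¹ = Real.log (1 / (1 - ρ)) := by
    have hzero : (0 : ℝ) ∉ uIcc (1 - ρ) (1 - 0) := by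
      rw [uIcc_of_le (by linarith)]
      exact fun h => by linarith [h.1]
    rw [intervalIntegral.integral_comp_sub_left (fun x : ℝ => x⁻¹), integral_inv hzero, sub_zero]
  rw [setLIntegral_Ioo_ofReal h0 hcont.intervalIntegrable
    fun r hr => inv_nonneg.2 (by linarith [hr.2]), hintegral]
  have hgap : 0 < 1 - ρ := by linarith
  have hgap2 : 0 < 1 - ρ ^ 2 := by nlinarith
  refine ENNReal.ofReal_le_ofReal (Real.log_le_log (by positivity) ?_)
  rw [div_le_div_iff₀ hgap hgap2]
  nlinarith

lemma setLIntegral_one_sub_rpow {ρ p : ℝ} (h1 : ρ < 1) (hp : 1 < p) :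
    ∫⁻ r in Ioo ρ 1, ENNReal.ofReal ((1 - r) ^ (p - 2)) =
      ENNReal.ofReal ((1 - ρ) ^ (p - 1) / (p - 1)) := by
  have hint : IntervalIntegrable (fun r : ℝ => (1 - r) ^ (p - 2)) volume ρ 1 := by
    simpa only [sub_sub_cancel, sub_zero] using (intervalIntegral.intervalIntegrable_rpow'
      (a := 1 - ρ) (b := 0) (r := p - 2) (by linarith)).comp_sub_left 1
  rw [setLIntegral_Ioo_ofReal h1.le hint fun r hr => Real.rpow_nonneg (by linarith [hr.2]) _,
    intervalIntegral.integral_comp_sub_left (fun x => x ^ (p - 2)),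
    integral_rpow (Or.inl (by linarith)), sub_self, show p - 2 + 1 = p - 1 by ring,
    Real.zero_rpow (by linarith), sub_zero]

lemma setLIntegral_radial_le {ρ p : ℝ} (h0 : 0 ≤ ρ) (h1 : ρ < 1) (hp : 1 < p) :
    ∫⁻ r in Ioo 0 1, ENNReal.ofReal ((1 - r) ^ (p - 2) * (1 - ρ * r) ^ (1 - p)) ≤
      ENNReal.ofReal (Real.log (2 / (1 - ρ ^ 2))) + ENNReal.ofReal (1 / (p - 1)) := by
  rw [← Ioc_union_Ioo_eq_Ioo h0 h1]
  refine (lintegral_union_le _ _ _).trans (add_le_add ?_ ?_)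
  · rw [← restrict_Ioo_eq_restrict_Ioc]
    refine le_trans (setLIntegral_mono' measurableSet_Ioo fun r hr => ?_)
      (setLIntegral_one_sub_inv_le h0 h1)
    refine ENNReal.ofReal_le_ofReal ?_
    have hr1 : 0 < 1 - r := by linarith [hr.2]
    calc (1 - r) ^ (p - 2) * (1 - ρ * r) ^ (1 - p)
        ≤ (1 - r) ^ (p - 2) * (1 - r) ^ (1 - p) := by
          gcongr ?_ * ?_
          exact Real.rpow_le_rpow_of_nonpos hr1 (by nlinarith [hr.1]) (by linarith)
      _ = (1 - r)⁻¹ := by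
          rw [← Real.rpow_add hr1, ← Real.rpow_neg_one]
          congr 1
          ring
  · have hρ1 : 0 < 1 - ρ := by linarith
    calc ∫⁻ r in Ioo ρ 1, ENNReal.ofReal ((1 - r) ^ (p - 2) * (1 - ρ * r) ^ (1 - p))
        ≤ ∫⁻ r in Ioo ρ 1, ENNReal.ofReal ((1 - ρ) ^ (1 - p)) *
            ENNReal.ofReal ((1 - r) ^ (p - 2)) := by
          refine setLIntegral_mono' measurableSet_Ioo fun r hr => ?_
          have hr1 : 0 ≤ 1 - r := by linarith [hr.2]
          rw [← ENNReal.ofReal_mul (by positivity), mul_comm]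
          refine ENNReal.ofReal_le_ofReal ?_
          gcongr ?_ * _
          exact Real.rpow_le_rpow_of_nonpos hρ1 (by nlinarith [hr.2]) (by linarith)
      _ = ENNReal.ofReal (1 / (p - 1)) := by
          rw [lintegral_const_mul' _ _ ENNReal.ofReal_ne_top, setLIntegral_one_sub_rpow h1 hp,
            ← ENNReal.ofReal_mul (by positivity), ← mul_div_assoc, ← Real.rpow_add hρ1,
            show 1 - p + (p - 1) = 0 by ring, Real.rpow_zero]

lemma setLIntegral_circleMap_deriv_logKernel_le {p : ℝ} (hp : 1 < p) {a : ℂ}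
    (ha : a ∈ ball (0 : ℂ) 1) {r : ℝ} (hr : r ∈ Ioo 0 1) :
    ∫⁻ θ in Ioo (-π) π, ENNReal.ofReal (‖deriv (logKernel a) (circleMap 0 r θ)‖ ^ p) ≤
      ENNReal.ofReal (5 ^ p * (2 / (p - 1)) * (1 - ‖a‖ * r) ^ (1 - p)) := by
  set w : ℂ := starRingEnd ℂ a * r with hw
  have hwnorm : ‖w‖ = ‖a‖ * r := by
    rw [hw, norm_mul, RCLike.norm_conj, norm_real, Real.norm_of_nonneg hr.1.le]
  have ha1 := mem_ball_zero_iff.1 ha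
  have hw1 : ‖w‖ < 1 := by
    rw [hwnorm]
    nlinarith [norm_nonneg a, hr.1, hr.2]
  have hpi : -π ≤ π := by linarith [pi_pos]
  rw [← hwnorm]
  refine le_trans ?_ (ENNReal.ofReal_le_ofReal (integral_norm_one_sub_mul_exp_rpow_neg_le hp hw1))
  rw [← setLIntegral_Ioo_ofReal hpi
    ((continuous_norm_one_sub_mul_exp_rpow hw1 (-p)).intervalIntegrable _ _)
    fun θ _ => Real.rpow_nonneg (norm_nonneg _) _]
  refine lintegral_mono fun θ => ENNReal.ofReal_le_ofReal ?_
  rw [(hasDerivAt_logKernel ha (circleMap_zero_mem_ball hr θ)).deriv, circleMap_zero, ← mul_assoc,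
    norm_div, RCLike.norm_conj, Real.div_rpow (norm_nonneg _) (norm_nonneg _),
    Real.rpow_neg (norm_nonneg _), div_eq_mul_inv]
  exact mul_le_of_le_one_left (by positivity)
    (Real.rpow_le_one (norm_nonneg _) ha1.le (by linarith))

lemma besovEnergy_ball (p : ℝ) (f : ℂ → ℂ) (R : ℝ) :
    besovEnergy p f (ball 0 R) = ∫⁻ r in Ioo 0 R, ENNReal.ofReal (r / π) *
      (ENNReal.ofReal ((1 - r) ^ (p - 2)) *
        ∫⁻ θ in Ioo (-π) π, ENNReal.ofReal (‖deriv f (circleMap 0 r θ)‖ ^ p)) := by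
  have := measurable_deriv f
  rw [besovEnergy, setLIntegral_ball_dA (by fun_prop)]
  refine setLIntegral_congr_fun measurableSet_Ioo fun r hr => ?_
  rw [← lintegral_const_mul' (ENNReal.ofReal ((1 - r) ^ (p - 2))) _ ENNReal.ofReal_ne_top]
  congr 1
  refine lintegral_congr fun θ => ?_
  rw [norm_circleMap_zero, abs_of_pos hr.1, ENNReal.ofReal_mul' (by positivity)]

lemma besovEnergy_logKernel_le {p : ℝ} (hp : 1 < p) {a : ℂ} (ha : a ∈ ball (0 : ℂ) 1) :
    besovEnergy p (logKernel a) (ball 0 1) ≤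
      ENNReal.ofReal (5 ^ p * (2 / (p - 1))) *
        (ENNReal.ofReal (logWeight a) + ENNReal.ofReal (1 / (p - 1))) := by
  have : 0 < p - 1 := by linarith
  have ha1 := mem_ball_zero_iff.1 ha
  rw [besovEnergy_ball]
  calc _ ≤ ∫⁻ r in Ioo 0 1, ENNReal.ofReal (5 ^ p * (2 / (p - 1))) *
        ENNReal.ofReal ((1 - r) ^ (p - 2) * (1 - ‖a‖ * r) ^ (1 - p)) := by
        refine setLIntegral_mono' measurableSet_Ioo fun r hr => ?_
        have hr1 : 0 ≤ 1 - r := by linarith [hr.2]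
        have hrπ : ENNReal.ofReal (r / π) ≤ 1 := by
          rw [ENNReal.ofReal_le_one, div_le_one pi_pos]
          linarith [hr.2, pi_gt_three]
        refine (mul_le_of_le_one_left' hrπ).trans ?_
        grw [setLIntegral_circleMap_deriv_logKernel_le hp ha hr]
        rw [← ENNReal.ofReal_mul (by positivity), ← ENNReal.ofReal_mul (by positivity)]
        exact (congrArg ENNReal.ofReal (by ring)).le
    _ ≤ _ := by
        rw [lintegral_const_mul' _ _ ENNReal.ofReal_ne_top]
        gcongr
        exact setLIntegral_radial_le (norm_nonneg a) ha1 hp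

lemma exists_besovEnergy_logKernel_le {p : ℝ} (hp : 1 < p) :
    ∃ C : NNReal, ∀ a ∈ ball (0 : ℂ) 1,
      besovEnergy p (logKernel a) (ball 0 1) ≤ C * ENNReal.ofReal (logWeight a) := by
  have hp1 : 0 < p - 1 := by linarith
  have := Real.log_pos one_lt_two
  refine ⟨(5 ^ p * (2 / (p - 1)) * (1 + 1 / ((p - 1) * Real.log 2))).toNNReal, fun a ha => ?_⟩
  have hweight := log_two_le_logWeight ha
  refine (besovEnergy_logKernel_le hp ha).trans ?_
  rw [← ENNReal.ofReal_add (logWeight_pos ha).le (by positivity),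
    ← ENNReal.ofReal_mul (by positivity), ← ENNReal.ofReal, ← ENNReal.ofReal_mul (by positivity),
    mul_assoc (5 ^ p * (2 / (p - 1)))]
  refine ENNReal.ofReal_le_ofReal ?_
  gcongr
  have hconst : 1 / (p - 1) = 1 / ((p - 1) * Real.log 2) * Real.log 2 := by field_simp
  rw [add_mul, one_mul, hconst]
  gcongr

/-! ### Growth of Besov functions -/

lemma exists_lintegral_deriv_mul_logKernel_le {p q : ℝ} (hpq : p.HolderConjugate q) :
    ∃ C : NNReal, ∀ (f : ℂ → ℂ) (S : Set ℂ), MeasurableSet S → S ⊆ ball 0 1 →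
      ∀ z ∈ ball (0 : ℂ) 1, ∫⁻ w in S, ‖deriv f w‖ₑ * ‖deriv (logKernel z) w‖ₑ ∂dA ≤
        C * besovEnergy p f S ^ (1 / p) * ENNReal.ofReal (logWeight z ^ (1 / q)) := by
  obtain ⟨C, hC⟩ := exists_besovEnergy_logKernel_le hpq.symm.lt
  have hq : 0 ≤ 1 / q := one_div_nonneg.2 hpq.symm.nonneg
  refine ⟨C ^ (1 / q), fun f S hS hsub z hz => ?_⟩
  calc ∫⁻ w in S, ‖deriv f w‖ₑ * ‖deriv (logKernel z) w‖ₑ ∂dA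
      ≤ besovEnergy p f S ^ (1 / p) * besovEnergy q (logKernel z) S ^ (1 / q) :=
        lintegral_deriv_mul_deriv_le hpq f _ hS hsub
    _ ≤ besovEnergy p f S ^ (1 / p) * (C * ENNReal.ofReal (logWeight z)) ^ (1 / q) := by
        gcongr
        exact (lintegral_mono_set hsub).trans (hC z hz)
    _ = _ := by
        rw [ENNReal.mul_rpow_of_nonneg _ _ hq,
          ENNReal.ofReal_rpow_of_nonneg (logWeight_pos hz).le hq, ENNReal.coe_rpow_of_nonneg _ hq]
        ring

instance : IsFiniteMeasureOnCompacts dA :=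
  IsFiniteMeasureOnCompacts.smul _ (by simp [pi_pos])

lemma exists_setLIntegral_sdiff_closedBall_lt {φ : ℂ → ENNReal}
    (hφ : ∫⁻ z in ball (0 : ℂ) 1, φ z ∂dA ≠ ⊤) {ε : ENNReal} (hε : 0 < ε) :
    ∃ R < 1, ∫⁻ z in ball (0 : ℂ) 1 \ closedBall 0 R, φ z ∂dA < ε := by
  let A (n : ℕ) : Set ℂ := ball 0 1 \ closedBall 0 (1 - 1 / ((n : ℝ) + 1))
  have hmeas (n : ℕ) : MeasurableSet (A n) := measurableSet_ball.diff measurableSet_closedBall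
  have hanti : Antitone A := fun m n hmn =>
    sdiff_subset_sdiff_right <| closedBall_subset_closedBall <|
      sub_le_sub_left (Nat.one_div_le_one_div hmn) 1
  have hinter : ⋂ n, A n = ∅ := by
    refine eq_empty_of_forall_notMem fun z hz => ?_
    rw [mem_iInter] at hz
    have hz1 : ‖z‖ < 1 := mem_ball_zero_iff.1 (hz 0).1
    obtain ⟨n, hn⟩ := exists_nat_one_div_lt (sub_pos.2 hz1)
    exact (hz n).2 (mem_closedBall_zero_iff.2 (by linarith))
  have hfin : dA.withDensity φ (A 0) ≠ ⊤ := by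
    rw [withDensity_apply _ (hmeas 0)]
    exact ne_top_of_le_ne_top hφ (lintegral_mono_set sdiff_subset)
  have hlim := tendsto_measure_iInter_atTop (fun n => (hmeas n).nullMeasurableSet) hanti ⟨0, hfin⟩
  rw [hinter, measure_empty] at hlim
  obtain ⟨n, hn⟩ := (hlim.eventually_lt_const hε).exists
  rw [Function.comp_apply, withDensity_apply _ (hmeas n)] at hn
  exact ⟨_, sub_lt_self 1 Nat.one_div_pos_of_nat, hn⟩

lemma exists_lintegral_closedBall_deriv_mul_logKernel_le {f : ℂ → ℂ} (hf : HolOn f) {R : ℝ}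
    (hR : R < 1) :
    ∃ M : NNReal, ∀ z ∈ ball (0 : ℂ) 1,
      ∫⁻ w in closedBall 0 R, ‖deriv f w‖ₑ * ‖deriv (logKernel z) w‖ₑ ∂dA ≤ M := by
  have hkernel : ∀ z ∈ ball (0 : ℂ) 1, ∀ w ∈ closedBall (0 : ℂ) R,
      ‖deriv (logKernel z) w‖ₑ ≤ ENNReal.ofReal (1 - R)⁻¹ := fun z hz w hw => by
    rw [(hasDerivAt_logKernel hz (closedBall_subset_ball hR hw)).deriv, ← ofReal_norm]
    rw [mem_ball_zero_iff] at hz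
    rw [mem_closedBall_zero_iff] at hw
    have hprod : ‖starRingEnd ℂ z * w‖ ≤ R := by
      rw [norm_mul, RCLike.norm_conj]
      nlinarith [norm_nonneg z, norm_nonneg w]
    have hlower := norm_sub_norm_le 1 (starRingEnd ℂ z * w)
    rw [norm_one] at hlower
    rw [norm_div, RCLike.norm_conj, ← one_div]
    have := sub_pos.2 hR
    refine ENNReal.ofReal_le_ofReal ?_
    gcongr
    linarith
  have hfin : ∫⁻ w in closedBall 0 R, ‖deriv f w‖ₑ * ENNReal.ofReal (1 - R)⁻¹ ∂dA ≠ ⊤ := by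
    have hint : IntegrableOn (deriv f) (closedBall 0 R) dA :=
      (hf.deriv.continuousOn.mono (closedBall_subset_ball hR)).integrableOn_compact
        (isCompact_closedBall 0 R)
    rw [lintegral_mul_const' _ _ ENNReal.ofReal_ne_top]
    exact ENNReal.mul_ne_top hint.hasFiniteIntegral.ne ENNReal.ofReal_ne_top
  refine ⟨(∫⁻ w in closedBall 0 R, ‖deriv f w‖ₑ * ENNReal.ofReal (1 - R)⁻¹ ∂dA).toNNReal,
    fun z hz => ?_⟩
  rw [ENNReal.coe_toNNReal hfin]
  refine setLIntegral_mono' measurableSet_closedBall fun w hw => ?_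
  gcongr
  exact hkernel z hz w hw

lemma exists_norm_le_add_mul_logWeight_rpow {p q : ℝ} (hpq : p.HolderConjugate q) {f : ℂ → ℂ}
    (hf : f ∈ Besov p) {ε : ℝ} (hε : 0 < ε) :
    ∃ M : ℝ, ∀ z ∈ ball (0 : ℂ) 1, ‖f z‖ ≤ M + ε * logWeight z ^ (1 / q) := by
  have hp : 0 < 1 / p := one_div_pos.2 hpq.pos
  obtain ⟨hol, hfin⟩ := hf
  obtain ⟨C, hC⟩ := exists_lintegral_deriv_mul_logKernel_le hpq
  obtain ⟨δ, hδ, hδε⟩ : ∃ δ > 0, ∀ E < δ, C * E ^ (1 / p) ≤ ENNReal.ofReal ε := by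
    have hlim : Tendsto (fun E : ENNReal => C * E ^ (1 / p)) (nhds 0) (nhds 0) := by
      have := ENNReal.Tendsto.const_mul (a := (C : ENNReal))
        ((ENNReal.continuous_rpow_const (y := 1 / p)).tendsto 0) (Or.inr ENNReal.coe_ne_top)
      rwa [ENNReal.zero_rpow_of_pos hp, mul_zero] at this
    have hev := hlim.eventually_le_const (ENNReal.ofReal_pos.2 hε)
    exact ENNReal.nhds_zero_basis.eventually_iff.1 hev
  obtain ⟨R, hR, htail⟩ := exists_setLIntegral_sdiff_closedBall_lt hfin.ne hδ
  obtain ⟨M, hM⟩ := exists_lintegral_closedBall_deriv_mul_logKernel_le hol hR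
  refine ⟨‖f 0‖ + M, fun z hz => ?_⟩
  have hweight : 0 ≤ ε * logWeight z ^ (1 / q) :=
    mul_nonneg hε.le (rpow_nonneg (logWeight_pos hz).le _)
  have hdiff : ‖f z - f 0‖ₑ ≤ ENNReal.ofReal (M + ε * logWeight z ^ (1 / q)) := by
    refine (hol.enorm_sub_le_lintegral_logKernel hz).trans ?_
    rw [← lintegral_inter_add_sdiff _ _ (measurableSet_closedBall (x := (0 : ℂ)) (ε := R)),
      inter_eq_self_of_subset_right (closedBall_subset_ball hR),
      ENNReal.ofReal_add M.coe_nonneg hweight, ENNReal.ofReal_mul hε.le, ENNReal.ofReal_coe_nnreal]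
    gcongr
    · exact hM z hz
    · refine (hC f _ (measurableSet_ball.diff measurableSet_closedBall) sdiff_subset z hz).trans ?_
      gcongr
      exact hδε _ htail
  rw [← ofReal_norm, ENNReal.ofReal_le_ofReal_iff (add_nonneg M.coe_nonneg hweight)] at hdiff
  linarith [norm_le_norm_add_norm_sub' (f z) (f 0)]

lemma mapsInto_littleBloch_of_mem_BlochLog {p q : ℝ} (hpq : p.HolderConjugate q) {g : ℂ → ℂ}
    (hg : g ∈ BlochLog (1 / q)) : MapsInto (Tg g) (Besov p) littleBloch := by
  intro f hf
  obtain ⟨hol, C, hC⟩ := hg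
  have hderiv {z : ℂ} (hz : z ∈ ball (0 : ℂ) 1) := hol.hasDerivAt_Tg hf.1 hz
  refine ⟨.of_hasDerivAt fun z hz => hderiv hz, fun ε hε => ?_⟩
  set δ := ε / (2 * (|C| + 1))
  have hδ : 0 < δ := by positivity
  obtain ⟨M, hM⟩ := exists_norm_le_add_mul_logWeight_rpow hpq hf hδ
  obtain ⟨r, hr, hlarge⟩ := exists_lt_logWeight_rpow (one_div_pos.2 hpq.symm.pos) (M / δ)
  refine ⟨r, hr, fun z hz hrz => ?_⟩
  have hgrowth : ‖f z‖ ≤ 2 * δ * logWeight z ^ (1 / q) := by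
    have := (div_lt_iff₀' hδ).1 (hlarge z hz hrz)
    linarith [hM z hz]
  have hgap := (one_sub_norm_sq_pos hz).le
  calc (1 - ‖z‖ ^ 2) * ‖deriv (Tg g f) z‖
      = (1 - ‖z‖ ^ 2) * ‖deriv g z‖ * ‖f z‖ := by rw [(hderiv hz).deriv, norm_mul, mul_assoc]
    _ ≤ (1 - ‖z‖ ^ 2) * ‖deriv g z‖ * (2 * δ * logWeight z ^ (1 / q)) := by gcongr
    _ = 2 * δ * ((1 - ‖z‖ ^ 2) * logWeight z ^ (1 / q) * ‖deriv g z‖) := by ring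
    _ ≤ 2 * δ * C := by gcongr; exact hC z hz
    _ < 2 * δ * (|C| + 1) := by gcongr; linarith [le_abs_self C]
    _ = ε := by simp only [δ]; field_simp

/-! ### Test functions and their superpositions -/

/-- The kernel `log (2 / (1 - ā z))` scaled to bounded Besov seminorm: the test functions against
which the values of `g'` are measured. The numerator `2` keeps their real part nonnegative on the
disc. -/
noncomputable def besovTest (p : ℝ) (a z : ℂ) : ℂ :=
  ((logWeight a ^ (-(1 / p)) : ℝ) : ℂ) * ((Real.log 2 : ℝ) + logKernel a z)

lemma hasDerivAt_besovTest (p : ℝ) {a z : ℂ} (ha : a ∈ ball (0 : ℂ) 1) (hz : z ∈ ball (0 : ℂ) 1) :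
    HasDerivAt (besovTest p a) ((logWeight a ^ (-(1 / p)) : ℝ) * deriv (logKernel a) z) z :=
  ((hasDerivAt_logKernel ha hz).differentiableAt.hasDerivAt.const_add _).const_mul _

lemma holOn_besovTest (p : ℝ) {a : ℂ} (ha : a ∈ ball (0 : ℂ) 1) : HolOn (besovTest p a) :=
  .of_hasDerivAt fun _ hz => hasDerivAt_besovTest p ha hz

lemma besovEnergy_besovTest {p : ℝ} (hp : 0 < p) {a : ℂ} (ha : a ∈ ball (0 : ℂ) 1) :
    besovEnergy p (besovTest p a) (ball 0 1) =
      ENNReal.ofReal (logWeight a)⁻¹ * besovEnergy p (logKernel a) (ball 0 1) := by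
  have hL := logWeight_pos ha
  unfold besovEnergy
  rw [← lintegral_const_mul' _ _ ENNReal.ofReal_ne_top]
  refine setLIntegral_congr_fun measurableSet_ball fun z hz => ?_
  have hscale : (logWeight a ^ (-(1 / p))) ^ p = (logWeight a)⁻¹ := by
    rw [← rpow_mul hL.le, neg_mul, one_div_mul_cancel hp.ne', rpow_neg_one]
  change ENNReal.ofReal _ = _ * ENNReal.ofReal _
  rw [(hasDerivAt_besovTest p ha hz).deriv, norm_mul, norm_real,
    Real.norm_of_nonneg (rpow_nonneg hL.le _),
    mul_rpow (rpow_nonneg hL.le _) (norm_nonneg _), hscale,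
    ← ENNReal.ofReal_mul (inv_nonneg.2 hL.le)]
  ring_nf

lemma exists_besovEnergy_besovTest_le {p : ℝ} (hp : 1 < p) :
    ∃ C : NNReal, ∀ a ∈ ball (0 : ℂ) 1, besovEnergy p (besovTest p a) (ball 0 1) ≤ C := by
  obtain ⟨C, hC⟩ := exists_besovEnergy_logKernel_le hp
  refine ⟨C, fun a ha => ?_⟩
  have hL := logWeight_pos ha
  rw [besovEnergy_besovTest (one_pos.trans hp) ha]
  calc _ ≤ ENNReal.ofReal (logWeight a)⁻¹ * (C * ENNReal.ofReal (logWeight a)) := by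
        gcongr
        exact hC a ha
    _ = C := by
        rw [mul_left_comm, ← ENNReal.ofReal_mul (inv_nonneg.2 hL.le), inv_mul_cancel₀ hL.ne',
          ENNReal.ofReal_one, mul_one]

lemma besovTest_self (p : ℝ) {a : ℂ} (ha : a ∈ ball (0 : ℂ) 1) :
    besovTest p a a = (logWeight a ^ (1 - 1 / p) : ℝ) := by
  have hgap := one_sub_norm_sq_pos ha
  have hkernel : logKernel a a = (-Real.log (1 - ‖a‖ ^ 2) : ℝ) := by
    rw [logKernel, conj_mul', ofReal_neg, ofReal_log hgap.le]
    push_cast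
    rfl
  rw [besovTest, hkernel, ← ofReal_add, ← sub_eq_add_neg, ← Real.log_div two_ne_zero hgap.ne',
    ← ofReal_mul, ← logWeight, sub_eq_neg_add, rpow_add (logWeight_pos ha), rpow_one]

lemma norm_besovTest_zero_le {p : ℝ} (hp : 0 < p) {a : ℂ} (ha : a ∈ ball (0 : ℂ) 1) :
    ‖besovTest p a 0‖ ≤ Real.log 2 ^ (-(1 / p)) * Real.log 2 := by
  have hlog := Real.log_pos one_lt_two
  have hkernel : logKernel a 0 = 0 := by simp [logKernel]
  rw [besovTest, hkernel, add_zero, norm_mul, norm_real, norm_real,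
    Real.norm_of_nonneg (rpow_nonneg (logWeight_pos ha).le _), Real.norm_of_nonneg hlog.le]
  exact mul_le_mul_of_nonneg_right
    (rpow_le_rpow_of_nonpos hlog (log_two_le_logWeight ha) (neg_nonpos.2 (one_div_pos.2 hp).le))
    hlog.le

lemma re_besovTest_nonneg (p : ℝ) {a z : ℂ} (ha : a ∈ ball (0 : ℂ) 1) (hz : z ∈ ball (0 : ℂ) 1) :
    0 ≤ (besovTest p a z).re := by
  have hnorm : ‖1 - starRingEnd ℂ a * z‖ ≤ 2 := by
    refine (norm_sub_le _ _).trans ?_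
    rw [norm_one, norm_mul, RCLike.norm_conj]
    nlinarith [mem_ball_zero_iff.1 ha, mem_ball_zero_iff.1 hz, norm_nonneg a, norm_nonneg z]
  have hpos : 0 < ‖1 - starRingEnd ℂ a * z‖ :=
    norm_pos_iff.2 (slitPlane_ne_zero (one_sub_conj_mul_mem_slitPlane ha hz))
  rw [besovTest, re_ofReal_mul, add_re, ofReal_re, logKernel, neg_re, log_re]
  have := Real.log_le_log hpos hnorm
  exact mul_nonneg (rpow_nonneg (logWeight_pos ha).le _) (by linarith)

lemma exists_norm_sub_le_mul_logWeight_rpow {p q : ℝ} (hpq : p.HolderConjugate q) (K : NNReal) :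
    ∃ M : NNReal, ∀ f, HolOn f → besovEnergy p f (ball 0 1) ≤ K →
      ∀ z ∈ ball (0 : ℂ) 1, ‖f z - f 0‖ ≤ M * logWeight z ^ (1 / q) := by
  have hp : 0 ≤ 1 / p := one_div_nonneg.2 hpq.nonneg
  obtain ⟨C, hC⟩ := exists_lintegral_deriv_mul_logKernel_le hpq
  refine ⟨C * K ^ (1 / p), fun f hf hK z hz => ?_⟩
  have hweight : 0 ≤ logWeight z ^ (1 / q) := rpow_nonneg (logWeight_pos hz).le _
  refine (ENNReal.ofReal_le_ofReal_iff (mul_nonneg (NNReal.coe_nonneg _) hweight)).1 ?_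
  calc ENNReal.ofReal ‖f z - f 0‖
      ≤ ∫⁻ w in ball 0 1, ‖deriv f w‖ₑ * ‖deriv (logKernel z) w‖ₑ ∂dA :=
        (ofReal_norm _).trans_le (hf.enorm_sub_le_lintegral_logKernel hz)
    _ ≤ C * besovEnergy p f (ball 0 1) ^ (1 / p) * ENNReal.ofReal (logWeight z ^ (1 / q)) :=
        hC f _ measurableSet_ball subset_rfl z hz
    _ ≤ C * (K : ENNReal) ^ (1 / p) * ENNReal.ofReal (logWeight z ^ (1 / q)) := by gcongr
    _ = ENNReal.ofReal ((C * K ^ (1 / p) : NNReal) * logWeight z ^ (1 / q)) := by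
        rw [ENNReal.ofReal_mul (NNReal.coe_nonneg _), ENNReal.ofReal_coe_nnreal, ENNReal.coe_mul,
          ENNReal.coe_rpow_of_nonneg _ hp]

lemma exists_norm_le_of_besovEnergy_le {p : ℝ} (hp : 1 < p) (K : NNReal) (B : ℝ) {r : ℝ}
    (hr : r < 1) :
    ∃ M : ℝ, ∀ f, HolOn f → besovEnergy p f (ball 0 1) ≤ K → ‖f 0‖ ≤ B →
      ∀ z ∈ ball (0 : ℂ) r, ‖f z‖ ≤ M := by
  have hpq := Real.HolderConjugate.conjExponent hp
  obtain ⟨M, hM⟩ := exists_norm_sub_le_mul_logWeight_rpow hpq K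
  refine ⟨B + M * logWeight r ^ (1 / p.conjExponent), fun f hf hK hB z hz => ?_⟩
  have hz1 : z ∈ ball (0 : ℂ) 1 := ball_subset_ball hr.le hz
  have hzr : ‖z‖ < r := mem_ball_zero_iff.1 hz
  have hnorm : ‖(r : ℂ)‖ = r := by
    rw [norm_real, Real.norm_of_nonneg ((norm_nonneg z).trans hzr.le)]
  have hweight : logWeight z ≤ logWeight r :=
    logWeight_le_logWeight (hzr.le.trans_eq hnorm.symm) (mem_ball_zero_iff.2 (hnorm.trans_lt hr))
  calc ‖f z‖ ≤ ‖f 0‖ + ‖f z - f 0‖ := norm_le_norm_add_norm_sub' _ _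
    _ ≤ B + M * logWeight z ^ (1 / p.conjExponent) := add_le_add hB (hM f hf hK z hz1)
    _ ≤ B + M * logWeight r ^ (1 / p.conjExponent) := by
        have := (logWeight_pos hz1).le
        have := one_div_nonneg.2 hpq.symm.nonneg
        gcongr

lemma rpow_tsum_mul_le_rpow_tsum_mul_tsum_mul_rpow {ι : Type*} {p : ℝ} (hp : 1 ≤ p)
    (w f : ι → ENNReal) :
    (∑' k, w k * f k) ^ p ≤ (∑' k, w k) ^ (p - 1) * ∑' k, w k * f k ^ p := by
  have hp0 : 0 < p := one_pos.trans_le hp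
  have hinv : 0 ≤ 1 - p⁻¹ := sub_nonneg.2 (inv_le_one_of_one_le₀ hp)
  have hsum : ∑' k, w k * f k ≤ (∑' k, w k) ^ (1 - p⁻¹) * (∑' k, w k * f k ^ p) ^ p⁻¹ := by
    rw [ENNReal.tsum_eq_iSup_sum]
    refine iSup_le fun s => (ENNReal.inner_le_weight_mul_Lp_of_nonneg s hp w f).trans ?_
    gcongr <;> exact ENNReal.sum_le_tsum s
  calc (∑' k, w k * f k) ^ p
      ≤ ((∑' k, w k) ^ (1 - p⁻¹) * (∑' k, w k * f k ^ p) ^ p⁻¹) ^ p := by gcongr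
    _ = (∑' k, w k) ^ (p - 1) * ∑' k, w k * f k ^ p := by
        rw [ENNReal.mul_rpow_of_nonneg _ _ hp0.le, ← ENNReal.rpow_mul, ← ENNReal.rpow_mul,
          inv_mul_cancel₀ hp0.ne', ENNReal.rpow_one, sub_mul, one_mul, inv_mul_cancel₀ hp0.ne']

lemma hasDerivAt_tsum_of_locally_bounded {ι : Type*} {f : ι → ℂ → ℂ} (hf : ∀ k, HolOn (f k))
    (hbdd : ∀ r < 1, ∃ B : ℝ, ∀ k, ∀ z ∈ ball (0 : ℂ) r, ‖f k z‖ ≤ B)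
    {c : ι → ℂ} (hc : Summable fun k => ‖c k‖) {z : ℂ} (hz : z ∈ ball (0 : ℂ) 1) :
    HasDerivAt (fun w => ∑' k, c k * f k w) (∑' k, c k * deriv (f k) z) z := by
  obtain ⟨r, hzr, hr⟩ := exists_between (mem_ball_zero_iff.1 hz)
  obtain ⟨B, hB⟩ := hbdd r hr
  have hzr : z ∈ ball (0 : ℂ) r := mem_ball_zero_iff.2 hzr
  have hu : Summable fun k => ‖c k‖ * B := hc.mul_right B
  have hdiff (k : ι) : DifferentiableOn ℂ (fun w => c k * f k w) (ball 0 r) :=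
    ((hf k).mono (ball_subset_ball hr.le)).const_mul (c k)
  have hle (k : ι) (w : ℂ) (hw : w ∈ ball (0 : ℂ) r) : ‖c k * f k w‖ ≤ ‖c k‖ * B := by
    rw [norm_mul]
    gcongr
    exact hB k w hw
  have hsum := (hasSum_deriv_of_summable_norm hu hdiff isOpen_ball hle hzr).tsum_eq
  have hterm (k : ι) : deriv (fun w => c k * f k w) z = c k * deriv (f k) z :=
    ((hf k).hasDerivAt hz).const_mul (c k) |>.deriv
  simp only [hterm] at hsum
  rw [hsum]
  exact ((differentiableOn_tsum_of_summable_norm hu hdiff isOpen_ball hle).differentiableAt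
    (isOpen_ball.mem_nhds hzr)).hasDerivAt

lemma besovEnergy_eq_lintegral_enorm {p : ℝ} (hp : 0 ≤ p) (f : ℂ → ℂ) :
    besovEnergy p f (ball 0 1) =
      ∫⁻ z in ball 0 1, ENNReal.ofReal ((1 - ‖z‖) ^ (p - 2)) * ‖deriv f z‖ₑ ^ p ∂dA := by
  refine setLIntegral_congr_fun measurableSet_ball fun z hz => ?_
  have hgap : 0 ≤ 1 - ‖z‖ := sub_nonneg.2 (mem_ball_zero_iff.1 hz).le
  change ENNReal.ofReal _ = _
  rw [ENNReal.ofReal_mul (rpow_nonneg hgap _), ← ENNReal.ofReal_rpow_of_nonneg (norm_nonneg _) hp,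
    ofReal_norm]

lemma besovEnergy_le_of_deriv_eq_tsum {ι : Type*} [Countable ι] {p : ℝ} (hp : 1 ≤ p)
    {f : ι → ℂ → ℂ} {c : ι → ℂ} (hc : ∑' k, ‖c k‖ₑ ≠ ⊤) {F : ℂ → ℂ}
    (hF : ∀ z ∈ ball (0 : ℂ) 1, deriv F z = ∑' k, c k * deriv (f k) z) :
    besovEnergy p F (ball 0 1) ≤
      (∑' k, ‖c k‖ₑ) ^ (p - 1) * ∑' k, ‖c k‖ₑ * besovEnergy p (f k) (ball 0 1) := by
  have hp0 : 0 ≤ p := zero_le_one.trans hp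
  have (k : ι) := measurable_deriv (f k)
  simp only [besovEnergy_eq_lintegral_enorm hp0]
  calc _ ≤ ∫⁻ z in ball 0 1, (∑' k, ‖c k‖ₑ) ^ (p - 1) *
          ∑' k, ‖c k‖ₑ * (ENNReal.ofReal ((1 - ‖z‖) ^ (p - 2)) * ‖deriv (f k) z‖ₑ ^ p) ∂dA := by
        refine setLIntegral_mono' measurableSet_ball fun z hz => ?_
        have hderiv : ‖deriv F z‖ₑ ≤ ∑' k, ‖c k‖ₑ * ‖deriv (f k) z‖ₑ := by
          simpa only [hF z hz, enorm_mul] using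
            enorm_tsum_le_tsum_enorm (f := fun k => c k * deriv (f k) z)
        grw [hderiv, rpow_tsum_mul_le_rpow_tsum_mul_tsum_mul_rpow hp]
        simp only [mul_left_comm _ (ENNReal.ofReal _), ENNReal.tsum_mul_left, le_refl]
    _ = _ := by
        rw [lintegral_const_mul' _ _ (ENNReal.rpow_ne_top_of_nonneg (sub_nonneg.2 hp) hc),
          lintegral_tsum fun k => by fun_prop]
        simp only [lintegral_const_mul' _ _ enorm_ne_top]

lemma tsum_mem_Besov {ι : Type*} [Countable ι] {p : ℝ} (hp : 1 < p) {f : ι → ℂ → ℂ}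
    (hf : ∀ k, HolOn (f k)) {K : NNReal} (hK : ∀ k, besovEnergy p (f k) (ball 0 1) ≤ K) {B : ℝ}
    (hB : ∀ k, ‖f k 0‖ ≤ B) {c : ι → ℂ} (hc : Summable fun k => ‖c k‖) :
    (fun z => ∑' k, c k * f k z) ∈ Besov p := by
  have hderiv {z : ℂ} (hz : z ∈ ball (0 : ℂ) 1) :
      HasDerivAt (fun w => ∑' k, c k * f k w) (∑' k, c k * deriv (f k) z) z := by
    refine hasDerivAt_tsum_of_locally_bounded hf (fun r hr => ?_) hc hz
    obtain ⟨M, hM⟩ := exists_norm_le_of_besovEnergy_le hp K B hr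
    exact ⟨M, fun k => hM (f k) (hf k) (hK k) (hB k)⟩
  have hsum : ∑' k, ‖c k‖ₑ ≠ ⊤ := by simpa only [ofReal_norm] using hc.tsum_ofReal_ne_top
  refine ⟨.of_hasDerivAt fun z hz => hderiv hz, ?_⟩
  calc besovEnergy p (fun z => ∑' k, c k * f k z) (ball 0 1)
      ≤ (∑' k, ‖c k‖ₑ) ^ (p - 1) * ∑' k, ‖c k‖ₑ * besovEnergy p (f k) (ball 0 1) :=
        besovEnergy_le_of_deriv_eq_tsum hp.le hsum fun z hz => (hderiv hz).deriv
    _ ≤ (∑' k, ‖c k‖ₑ) ^ (p - 1) * ∑' k, ‖c k‖ₑ * K := by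
        gcongr with k
        exact hK k
    _ < ⊤ := by
        rw [ENNReal.tsum_mul_right]
        exact ENNReal.mul_lt_top (ENNReal.rpow_lt_top_of_nonneg (sub_nonneg.2 hp.le) hsum)
          (ENNReal.mul_lt_top hsum.lt_top ENNReal.coe_lt_top)

lemma exists_norm_besovTest_le {p : ℝ} (hp : 1 < p) {r : ℝ} (hr : r < 1) :
    ∃ M : ℝ, ∀ a ∈ ball (0 : ℂ) 1, ∀ z ∈ ball (0 : ℂ) r, ‖besovTest p a z‖ ≤ M := by
  obtain ⟨K, hK⟩ := exists_besovEnergy_besovTest_le hp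
  obtain ⟨M, hM⟩ :=
    exists_norm_le_of_besovEnergy_le hp K (Real.log 2 ^ (-(1 / p)) * Real.log 2) hr
  exact ⟨M, fun a ha => hM _ (holOn_besovTest p ha) (hK a ha)
    (norm_besovTest_zero_le (one_pos.trans hp) ha)⟩

lemma re_le_norm_tsum {ι : Type*} {u : ι → ℂ} (hu : Summable u) (hre : ∀ k, 0 ≤ (u k).re) (n : ι) :
    (u n).re ≤ ‖∑' k, u k‖ :=
  calc (u n).re ≤ ∑' k, (u k).re := (hasSum_re hu.hasSum).summable.le_tsum n fun k _ => hre k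
    _ = (∑' k, u k).re := (re_tsum hu).symm
    _ ≤ ‖∑' k, u k‖ := re_le_norm _

lemma exists_mem_Besov_mul_logWeight_rpow_le {ι : Type*} [Countable ι] {p : ℝ} (hp : 1 < p)
    {a : ι → ℂ} (ha : ∀ k, a k ∈ ball (0 : ℂ) 1) {c : ι → ℝ} (hc : Summable c)
    (hc0 : ∀ k, 0 ≤ c k) :
    ∃ F ∈ Besov p, ∀ n, c n * logWeight (a n) ^ (1 - 1 / p) ≤ ‖F (a n)‖ := by
  obtain ⟨K, hK⟩ := exists_besovEnergy_besovTest_le hp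
  have hcnorm : Summable fun k => ‖(c k : ℂ)‖ := by
    simpa only [norm_real, Real.norm_of_nonneg (hc0 _)] using hc
  refine ⟨fun z => ∑' k, (c k : ℂ) * besovTest p (a k) z,
    tsum_mem_Besov hp (fun k => holOn_besovTest p (ha k)) (fun k => hK _ (ha k))
      (fun k => norm_besovTest_zero_le (one_pos.trans hp) (ha k)) hcnorm, fun n => ?_⟩
  have hsummable : Summable fun k => (c k : ℂ) * besovTest p (a k) (a n) := by
    obtain ⟨r, hnr, hr⟩ := exists_between (mem_ball_zero_iff.1 (ha n))
    obtain ⟨M, hM⟩ := exists_norm_besovTest_le hp hr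
    refine .of_norm_bounded (hcnorm.mul_right M) fun k => ?_
    rw [norm_mul]
    gcongr
    exact hM _ (ha k) _ (mem_ball_zero_iff.2 hnr)
  have hself : ((c n : ℂ) * besovTest p (a n) (a n)).re = c n * logWeight (a n) ^ (1 - 1 / p) := by
    rw [besovTest_self p (ha n), ← ofReal_mul, ofReal_re]
  rw [← hself]
  refine re_le_norm_tsum hsummable (fun k => ?_) n
  rw [re_ofReal_mul]
  exact mul_nonneg (hc0 k) (re_besovTest_nonneg p (ha k) (ha n))

lemma mem_BlochLog_of_mapsInto_Bloch {p q : ℝ} (hpq : p.HolderConjugate q) {g : ℂ → ℂ}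
    (hg : HolOn g) (hT : MapsInto (Tg g) (Besov p) Bloch) : g ∈ BlochLog (1 / q) := by
  have hconj : 1 - 1 / p = 1 / q := by
    rw [one_div, one_div, sub_eq_iff_eq_add', hpq.inv_add_inv_eq_one]
  by_contra hmem
  have hlarge (n : ℕ) : ∃ a ∈ ball (0 : ℂ) 1,
      (4 : ℝ) ^ n < (1 - ‖a‖ ^ 2) * logWeight a ^ (1 / q) * ‖deriv g a‖ := by
    by_contra! hle
    exact hmem ⟨hg, 4 ^ n, hle⟩
  choose a ha hlarge using hlarge
  obtain ⟨F, hF, hFa⟩ := exists_mem_Besov_mul_logWeight_rpow_le hpq.lt ha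
    summable_geometric_two fun n => by positivity
  obtain ⟨-, C, hC⟩ := hT F hF
  obtain ⟨n, hn⟩ := pow_unbounded_of_one_lt C (one_lt_two (α := ℝ))
  have hgap := (one_sub_norm_sq_pos (ha n)).le
  have hCn : (2 : ℝ) ^ n ≤ C :=
    calc (2 : ℝ) ^ n = (1 / 2) ^ n * 4 ^ n := by rw [← mul_pow]; norm_num
      _ ≤ (1 / 2) ^ n * ((1 - ‖a n‖ ^ 2) * logWeight (a n) ^ (1 / q) * ‖deriv g (a n)‖) := by
          gcongr
          exact (hlarge n).le
      _ = (1 - ‖a n‖ ^ 2) * (‖deriv g (a n)‖ * ((1 / 2) ^ n * logWeight (a n) ^ (1 - 1 / p))) := by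
          rw [hconj]; ring
      _ ≤ (1 - ‖a n‖ ^ 2) * (‖deriv g (a n)‖ * ‖F (a n)‖) := by
          gcongr
          exact hFa n
      _ = (1 - ‖a n‖ ^ 2) * ‖deriv (Tg g F) (a n)‖ := by
          rw [(hg.hasDerivAt_Tg hF.1 (ha n)).deriv, norm_mul]
      _ ≤ C := hC _ (ha n)
  exact hn.not_ge hCn

/-- For `1 < p < ∞` with conjugate exponent `p'` and `g` holomorphic on the
unit disc, the following are equivalent: (a) `T_g` maps `Bᵖ` into the Bloch space;
(b) `g ∈ 𝓑_{log,1/p'}`; (c) `T_g` maps `Bᵖ` into the little Bloch space. -/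
theorem stmt4 (p p' : ℝ) (hp : 1 < p) (hpp' : 1 / p + 1 / p' = 1)
    (g : ℂ → ℂ) (hg : HolOn g) :
    (MapsInto (Tg g) (Besov p) Bloch ↔ g ∈ BlochLog (1 / p')) ∧
    (g ∈ BlochLog (1 / p') ↔ MapsInto (Tg g) (Besov p) littleBloch) := by
  have hpq : p.HolderConjugate p' :=
    Real.holderConjugate_iff.2 ⟨hp, by simpa only [one_div] using hpp'⟩
  have hab : MapsInto (Tg g) (Besov p) Bloch → g ∈ BlochLog (1 / p') :=
    mem_BlochLog_of_mapsInto_Bloch hpq hg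
  have hbc : g ∈ BlochLog (1 / p') → MapsInto (Tg g) (Besov p) littleBloch :=
    mapsInto_littleBloch_of_mem_BlochLog hpq
  have hca : MapsInto (Tg g) (Besov p) littleBloch → MapsInto (Tg g) (Besov p) Bloch :=
    fun h f hf => littleBloch_subset_Bloch (h f hf)
  exact ⟨⟨hab, hca ∘ hbc⟩, ⟨hbc, hab ∘ hca⟩⟩
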